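/- Assume good X and let ρ : varsort → var → Option term be an assignment all of whose defined values are good terms. If the variable x at varsort xs is fresh for ρ (i.e., ρ xs x = None and x at varsort xs is fresh in every term in the range of ρ), then parallel substitution commutes with abstraction: (Abs xs x X)[ρ] = Abs xs x (X[ρ]). -/

import Mathlib

open scoped Classical

universe u

section Binding

variable (var varsort index bindex opsym : Type u)

/-! ### Inputs -/

/-- An `(α,β)`-input: a partial function from `α` to `β`. -/
abbrev Input (α β : Type u) : Type u := α → Option β

/-- The domain of an input. -/
def idom {α β : Type u} (inp : Input α β) : Set α := {a | inp a ≠ none}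

/-- The componentwise lifting of a predicate to inputs. -/
def liftP {α β : Type u} (P : β → Prop) (inp : Input α β) : Prop :=
  ∀ a b, inp a = some b → P b

/-- The componentwise lifting of a function to inputs. -/
def liftF {α β γ : Type u} (f : β → γ) (inp : Input α β) : Input α γ :=
  fun a => (inp a).map f

/-- An input is small if its domain has cardinality smaller than that of `var`. -/
def smallDom {α β : Type u} (inp : Input α β) : Prop :=
  Cardinal.mk (idom inp) < Cardinal.mk var

/-! ### Quasiterms -/

mutual
/-- Quasiterms: raw terms before quotienting by alpha-equivalence. -/
inductive QTerm : Type u where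
  | qVar : varsort → var → QTerm
  | qOp : opsym → (index → Option QTerm) → (bindex → Option QAbs) → QTerm
/-- Quasiabstractions. -/
inductive QAbs : Type u where
  | qAbs : varsort → var → QTerm → QAbs
end

/-- Transposition of two variables. -/
noncomputable def swapVar (z1 z2 x : var) : var :=
  if x = z1 then z2 else if x = z2 then z1 else x

/-- Sort-aware transposition of variables (acts only on variables of varsort `zs`). -/
noncomputable def swapVarS (zs xs : varsort) (z1 z2 x : var) : var :=
  if xs = zs then swapVar var z1 z2 x else x

variable {var varsort index bindex opsym}

/-- Swapping of the variables `z1`, `z2` at varsort `zs` in a quasiterm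
(transposing them everywhere, including binding positions). -/
noncomputable def qSwap (z1 z2 : var) (zs : varsort) :
    QTerm var varsort index bindex opsym → QTerm var varsort index bindex opsym :=
  QTerm.rec (motive_1 := fun _ => QTerm var varsort index bindex opsym)
    (motive_2 := fun _ => QAbs var varsort index bindex opsym)
    (motive_3 := fun _ => Option (QTerm var varsort index bindex opsym))
    (motive_4 := fun _ => Option (QAbs var varsort index bindex opsym))
    (fun xs x => .qVar xs (swapVarS var varsort zs xs z1 z2 x))
    (fun d _ _ rinp rbinp => .qOp d rinp rbinp)
    (fun xs x _ rX => .qAbs xs (swapVarS var varsort zs xs z1 z2 x) rX)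
    none (fun _ r => some r) none (fun _ r => some r)

/-- Swapping of variables in a quasiabstraction. -/
noncomputable def qSwapAbs (z1 z2 : var) (zs : varsort) :
    QAbs var varsort index bindex opsym → QAbs var varsort index bindex opsym
  | .qAbs xs x X => .qAbs xs (swapVarS var varsort zs xs z1 z2 x) (qSwap z1 z2 zs X)

/-! ### Freshness and goodness -/

mutual
/-- `QFresh ys y X`: the variable `y` of varsort `ys` has no free occurrence in `X`. -/
inductive QFresh : varsort → var → QTerm var varsort index bindex opsym → Prop where
  | qVar : ∀ {ys y xs x}, (ys, y) ≠ (xs, x) → QFresh ys y (.qVar xs x)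
  | qOp : ∀ {ys y d inp binp}, (∀ i X, inp i = some X → QFresh ys y X) →
      (∀ j A, binp j = some A → QFreshAbs ys y A) → QFresh ys y (.qOp d inp binp)
/-- Freshness for quasiabstractions. -/
inductive QFreshAbs : varsort → var → QAbs var varsort index bindex opsym → Prop where
  | qAbs_bound : ∀ {xs x X}, QFreshAbs xs x (.qAbs xs x X)
  | qAbs_body : ∀ {ys y xs x X}, QFresh ys y X → QFreshAbs ys y (.qAbs xs x X)
end

mutual
/-- Good quasiterms: all constructors branch less than `|var|`. -/
inductive QGood : QTerm var varsort index bindex opsym → Prop where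
  | qVar : ∀ {xs x}, QGood (.qVar xs x)
  | qOp : ∀ {d inp binp}, (∀ i X, inp i = some X → QGood X) →
      (∀ j A, binp j = some A → QGoodAbs A) →
      smallDom var inp → smallDom var binp → QGood (.qOp d inp binp)
/-- Good quasiabstractions. -/
inductive QGoodAbs : QAbs var varsort index bindex opsym → Prop where
  | qAbs : ∀ {xs x X}, QGood X → QGoodAbs (.qAbs xs x X)
end

/-! ### Alpha-equivalence -/

mutual
/-- Alpha-equivalence of quasiterms. -/
inductive Alpha : QTerm var varsort index bindex opsym →
    QTerm var varsort index bindex opsym → Prop where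
  | qVar : ∀ {xs x}, Alpha (.qVar xs x) (.qVar xs x)
  | qOp : ∀ {d inp binp inp' binp'},
      (∀ i, inp i = none ↔ inp' i = none) →
      (∀ i X X', inp i = some X → inp' i = some X' → Alpha X X') →
      (∀ j, binp j = none ↔ binp' j = none) →
      (∀ j A A', binp j = some A → binp' j = some A' → AlphaAbs A A') →
      Alpha (.qOp d inp binp) (.qOp d inp' binp')
/-- Alpha-equivalence of quasiabstractions (the exists-fresh formulation). -/
inductive AlphaAbs : QAbs var varsort index bindex opsym →
    QAbs var varsort index bindex opsym → Prop where
  | qAbs : ∀ {xs x x' X X' y}, y ∉ ({x, x'} : Set var) →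
      QFresh xs y X → QFresh xs y X' →
      Alpha (qSwap y x xs X) (qSwap y x' xs X') →
      AlphaAbs (.qAbs xs x X) (.qAbs xs x' X')
end

/-! ### Terms and abstractions as quotients -/

variable (var varsort index bindex opsym)

/-- Terms: quasiterms modulo alpha-equivalence. -/
def Term : Type u := Quot (@Alpha var varsort index bindex opsym)

/-- Abstractions: quasiabstractions modulo alpha-equivalence. -/
def Abstr : Type u := Quot (@AlphaAbs var varsort index bindex opsym)

variable {var varsort index bindex opsym}

/-- The projection from quasiterms to terms. -/
def tmk : QTerm var varsort index bindex opsym → Term var varsort index bindex opsym :=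
  Quot.mk _

/-- The projection from quasiabstractions to abstractions. -/
def amk : QAbs var varsort index bindex opsym → Abstr var varsort index bindex opsym :=
  Quot.mk _

/-- A representative of a term. -/
noncomputable def trep (X : Term var varsort index bindex opsym) :
    QTerm var varsort index bindex opsym := Quot.out X

/-- A representative of an abstraction. -/
noncomputable def arep (A : Abstr var varsort index bindex opsym) :
    QAbs var varsort index bindex opsym := Quot.out A

/-- Good terms. -/
def good (X : Term var varsort index bindex opsym) : Prop := QGood (trep X)

/-- Good abstractions. -/
def goodAbs (A : Abstr var varsort index bindex opsym) : Prop := QGoodAbs (arep A)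

/-- The variable-injection constructor on terms. -/
def Var (xs : varsort) (x : var) : Term var varsort index bindex opsym :=
  tmk (.qVar xs x)

/-- The operation constructor on terms. -/
noncomputable def Op (d : opsym) (inp : Input index (Term var varsort index bindex opsym))
    (binp : Input bindex (Abstr var varsort index bindex opsym)) :
    Term var varsort index bindex opsym :=
  tmk (.qOp d (liftF trep inp) (liftF arep binp))

/-- The abstraction constructor. -/
noncomputable def Abs (xs : varsort) (x : var) (X : Term var varsort index bindex opsym) :
    Abstr var varsort index bindex opsym :=
  amk (.qAbs xs x (trep X))

/-- Freshness on terms. -/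
def fresh (ys : varsort) (y : var) (X : Term var varsort index bindex opsym) : Prop :=
  QFresh ys y (trep X)

/-- Freshness on abstractions. -/
def freshAbs (ys : varsort) (y : var) (A : Abstr var varsort index bindex opsym) : Prop :=
  QFreshAbs ys y (arep A)

/-- Swapping on terms. -/
noncomputable def tswap (X : Term var varsort index bindex opsym)
    (z1 z2 : var) (zs : varsort) : Term var varsort index bindex opsym :=
  tmk (qSwap z1 z2 zs (trep X))

/-! ### Substitution -/

mutual
/-- The graph of capture-avoiding substitution on quasiterms:
`QSubst X Y y ys Z` means that `Z` is a result of substituting `Y` for the free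
occurrences of the variable `y` of varsort `ys` in `X` (along a capture-free
representative). -/
inductive QSubst : QTerm var varsort index bindex opsym →
    QTerm var varsort index bindex opsym → var → varsort →
    QTerm var varsort index bindex opsym → Prop where
  | var_eq : ∀ {Y y ys}, QSubst (.qVar ys y) Y y ys Y
  | var_ne : ∀ {Y y ys xs x}, (xs, x) ≠ (ys, y) → QSubst (.qVar xs x) Y y ys (.qVar xs x)
  | op : ∀ {Y y ys d inp binp inp' binp'},
      (∀ i, inp i = none ↔ inp' i = none) →
      (∀ i X X', inp i = some X → inp' i = some X' → QSubst X Y y ys X') →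
      (∀ j, binp j = none ↔ binp' j = none) →
      (∀ j A A', binp j = some A → binp' j = some A' → QSubstAbs A Y y ys A') →
      QSubst (.qOp d inp binp) Y y ys (.qOp d inp' binp')
/-- The graph of capture-avoiding substitution on quasiabstractions. -/
inductive QSubstAbs : QAbs var varsort index bindex opsym →
    QTerm var varsort index bindex opsym → var → varsort →
    QAbs var varsort index bindex opsym → Prop where
  | abs : ∀ {Y y ys xs x X X'}, (xs, x) ≠ (ys, y) → QFresh xs x Y →
      QSubst X Y y ys X' → QSubstAbs (.qAbs xs x X) Y y ys (.qAbs xs x X')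
end

/-- The graph of capture-avoiding substitution on terms. -/
def SubstRel (X Y : Term var varsort index bindex opsym) (y : var) (ys : varsort)
    (Z : Term var varsort index bindex opsym) : Prop :=
  ∃ qX qZ, tmk qX = X ∧ tmk qZ = Z ∧ QSubst qX (trep Y) y ys qZ

/-- Capture-avoiding substitution on terms: `subst X Y y ys` is `X[Y/y]_ys`. -/
noncomputable def subst (X Y : Term var varsort index bindex opsym)
    (y : var) (ys : varsort) : Term var varsort index bindex opsym :=
  if h : ∃ Z, SubstRel X Y y ys Z then h.choose else X

/-- The graph of capture-avoiding substitution on abstractions. -/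
def SubstAbsRel (A : Abstr var varsort index bindex opsym)
    (Y : Term var varsort index bindex opsym) (y : var) (ys : varsort)
    (B : Abstr var varsort index bindex opsym) : Prop :=
  ∃ qA qB, amk qA = A ∧ amk qB = B ∧ QSubstAbs qA (trep Y) y ys qB

/-- Capture-avoiding substitution on abstractions: `substAbs A Y y ys` is `A[Y/y]_ys`. -/
noncomputable def substAbs (A : Abstr var varsort index bindex opsym)
    (Y : Term var varsort index bindex opsym) (y : var) (ys : varsort) :
    Abstr var varsort index bindex opsym :=
  if h : ∃ B, SubstAbsRel A Y y ys B then h.choose else A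

/-! ### Parallel substitution -/

mutual
/-- The graph of capture-avoiding parallel substitution on quasiterms, along an
assignment `ρ : varsort → var → Option qterm`. -/
inductive QPSubst : QTerm var varsort index bindex opsym →
    (varsort → var → Option (QTerm var varsort index bindex opsym)) →
    QTerm var varsort index bindex opsym → Prop where
  | var_some : ∀ {ρ xs x Y}, ρ xs x = some Y → QPSubst (.qVar xs x) ρ Y
  | var_none : ∀ {ρ xs x}, ρ xs x = none → QPSubst (.qVar xs x) ρ (.qVar xs x)
  | op : ∀ {ρ d inp binp inp' binp'},
      (∀ i, inp i = none ↔ inp' i = none) →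
      (∀ i X X', inp i = some X → inp' i = some X' → QPSubst X ρ X') →
      (∀ j, binp j = none ↔ binp' j = none) →
      (∀ j A A', binp j = some A → binp' j = some A' → QPSubstAbs A ρ A') →
      QPSubst (.qOp d inp binp) ρ (.qOp d inp' binp')
/-- The graph of capture-avoiding parallel substitution on quasiabstractions. -/
inductive QPSubstAbs : QAbs var varsort index bindex opsym →
    (varsort → var → Option (QTerm var varsort index bindex opsym)) →
    QAbs var varsort index bindex opsym → Prop where
  | abs : ∀ {ρ xs x X X'}, ρ xs x = none →
      (∀ ys y Y, ρ ys y = some Y → QFresh xs x Y) →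
      QPSubst X ρ X' → QPSubstAbs (.qAbs xs x X) ρ (.qAbs xs x X')
end

/-- Turning a term-valued assignment into a quasiterm-valued one, by picking
representatives. -/
noncomputable def qassign (ρ : varsort → var → Option (Term var varsort index bindex opsym)) :
    varsort → var → Option (QTerm var varsort index bindex opsym) :=
  fun xs x => (ρ xs x).map trep

/-- The graph of parallel substitution on terms. -/
def PSubstRel (X : Term var varsort index bindex opsym)
    (ρ : varsort → var → Option (Term var varsort index bindex opsym))
    (Z : Term var varsort index bindex opsym) : Prop :=
  ∃ qX qZ, tmk qX = X ∧ tmk qZ = Z ∧ QPSubst qX (qassign ρ) qZ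

/-- Capture-avoiding parallel substitution on terms: `psubst X ρ` is `X[ρ]`. -/
noncomputable def psubst (X : Term var varsort index bindex opsym)
    (ρ : varsort → var → Option (Term var varsort index bindex opsym)) :
    Term var varsort index bindex opsym :=
  if h : ∃ Z, PSubstRel X ρ Z then h.choose else X

/-- The graph of parallel substitution on abstractions. -/
def PSubstAbsRel (A : Abstr var varsort index bindex opsym)
    (ρ : varsort → var → Option (Term var varsort index bindex opsym))
    (B : Abstr var varsort index bindex opsym) : Prop :=
  ∃ qA qB, amk qA = A ∧ amk qB = B ∧ QPSubstAbs qA (qassign ρ) qB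

/-- Capture-avoiding parallel substitution on abstractions. -/
noncomputable def psubstAbs (A : Abstr var varsort index bindex opsym)
    (ρ : varsort → var → Option (Term var varsort index bindex opsym)) :
    Abstr var varsort index bindex opsym :=
  if h : ∃ B, PSubstAbsRel A ρ B then h.choose else A

/-! ### Helper lemmas -/

theorem qind {P : QTerm var varsort index bindex opsym → Prop}
    {Q : QAbs var varsort index bindex opsym → Prop}
    (hv : ∀ xs x, P (.qVar xs x))
    (ho : ∀ d inp binp, (∀ i X, inp i = some X → P X) → (∀ j A, binp j = some A → Q A) →
      P (.qOp d inp binp))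
    (ha : ∀ xs x X, P X → Q (.qAbs xs x X)) : (∀ X, P X) ∧ (∀ A, Q A) := by
  have h : ∀ X, P X := fun X =>
    QTerm.rec (motive_1 := P) (motive_2 := Q)
      (motive_3 := fun o => ∀ X, o = some X → P X)
      (motive_4 := fun o => ∀ A, o = some A → Q A)
      hv (fun d inp binp h1 h2 => ho d inp binp h1 h2) ha
      (by intro X h; cases h) (by intro X h Y e; cases e; exact h)
      (by intro X h; cases h) (by intro X h Y e; cases e; exact h) X
  refine ⟨h, ?_⟩
  rintro ⟨xs, x, X⟩
  exact ha xs x X (h X)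

/-- Applying a sorted family of permutations to a quasiterm. -/
noncomputable def qPerm (p : varsort → Equiv.Perm var) :
    QTerm var varsort index bindex opsym → QTerm var varsort index bindex opsym :=
  QTerm.rec (motive_1 := fun _ => QTerm var varsort index bindex opsym)
    (motive_2 := fun _ => QAbs var varsort index bindex opsym)
    (motive_3 := fun _ => Option (QTerm var varsort index bindex opsym))
    (motive_4 := fun _ => Option (QAbs var varsort index bindex opsym))
    (fun xs x => .qVar xs (p xs x))
    (fun d _ _ rinp rbinp => .qOp d rinp rbinp)
    (fun xs x _ rX => .qAbs xs (p xs x) rX)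
    none (fun _ r => some r) none (fun _ r => some r)

noncomputable def qPermAbs (p : varsort → Equiv.Perm var) :
    QAbs var varsort index bindex opsym → QAbs var varsort index bindex opsym
  | .qAbs xs x X => .qAbs xs (p xs x) (qPerm p X)

theorem qPerm_var (p : varsort → Equiv.Perm var) (xs : varsort) (x : var) :
    qPerm (index := index) (bindex := bindex) (opsym := opsym) p (.qVar xs x)
      = .qVar xs (p xs x) := rfl

theorem qPerm_op (p : varsort → Equiv.Perm var) (d : opsym)
    (inp : index → Option (QTerm var varsort index bindex opsym))
    (binp : bindex → Option (QAbs var varsort index bindex opsym)) :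
    qPerm p (.qOp d inp binp)
      = .qOp d (fun i => (inp i).map (qPerm p)) (fun j => (binp j).map (qPermAbs p)) := by
  show QTerm.qOp d _ _ = _
  congr 1
  · funext i
    cases h : inp i <;> rfl
  · funext j
    cases h : binp j with
    | none => rfl
    | some A => cases A; rfl

theorem qSwap_op (z1 z2 : var) (zs : varsort) (d : opsym)
    (inp : index → Option (QTerm var varsort index bindex opsym))
    (binp : bindex → Option (QAbs var varsort index bindex opsym)) :
    qSwap z1 z2 zs (.qOp d inp binp)
      = .qOp d (fun i => (inp i).map (qSwap z1 z2 zs))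
          (fun j => (binp j).map (qSwapAbs z1 z2 zs)) := by
  show QTerm.qOp d _ _ = _
  congr 1
  · funext i
    cases h : inp i <;> rfl
  · funext j
    cases h : binp j with
    | none => rfl
    | some A => cases A; rfl

/-- The sorted transposition. -/
noncomputable def sw (zs : varsort) (z1 z2 : var) : varsort → Equiv.Perm var :=
  fun xs => if xs = zs then Equiv.swap z1 z2 else 1

theorem swapVarS_eq (zs xs : varsort) (z1 z2 x : var) :
    swapVarS var varsort zs xs z1 z2 x = sw zs z1 z2 xs x := by
  unfold swapVarS sw swapVar
  split_ifs <;> simp_all [Equiv.swap_apply_def]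

theorem qSwap_eq (z1 z2 : var) (zs : varsort) :
    (∀ X : QTerm var varsort index bindex opsym, qSwap z1 z2 zs X = qPerm (sw zs z1 z2) X) ∧
    (∀ A : QAbs var varsort index bindex opsym,
      qSwapAbs z1 z2 zs A = qPermAbs (sw zs z1 z2) A) := by
  apply qind
  · intro xs x
    show QTerm.qVar xs _ = _
    rw [swapVarS_eq]; rfl
  · intro d inp binp h1 h2
    rw [qSwap_op, qPerm_op]
    congr 1
    · funext i
      cases h : inp i with
      | none => rfl
      | some X => simp [h1 i X h]
    · funext i
      cases h : binp i with
      | none => rfl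
      | some X => simp [h2 i X h]
  · intro xs x X h
    simp only [qSwapAbs, qPermAbs, h, swapVarS_eq]

theorem qPerm_comp (p q : varsort → Equiv.Perm var) :
    (∀ X : QTerm var varsort index bindex opsym,
      qPerm p (qPerm q X) = qPerm (fun s => p s * q s) X) ∧
    (∀ A : QAbs var varsort index bindex opsym,
      qPermAbs p (qPermAbs q A) = qPermAbs (fun s => p s * q s) A) := by
  apply qind
  · intro xs x
    rfl
  · intro d inp binp h1 h2
    simp only [qPerm_op]
    congr 1
    · funext i
      cases h : inp i with
      | none => rfl
      | some X => simp [h1 i X h]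
    · funext i
      cases h : binp i with
      | none => rfl
      | some X => simp [h2 i X h]
  · intro xs x X h
    simp only [qPermAbs, h]; rfl

theorem qPerm_one :
    (∀ X : QTerm var varsort index bindex opsym, qPerm (fun _ => 1) X = X) ∧
    (∀ A : QAbs var varsort index bindex opsym, qPermAbs (fun _ => 1) A = A) := by
  apply qind
  · intro xs x
    rfl
  · intro d inp binp h1 h2
    simp only [qPerm_op]
    congr 1
    · funext i
      cases h : inp i with
      | none => rfl
      | some X => simp [h1 i X h]
    · funext i
      cases h : binp i with
      | none => rfl
      | some X => simp [h2 i X h]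
  · intro xs x X h
    simp only [qPermAbs, h]; rfl

theorem qSwap_qSwap (z1 z2 : var) (zs : varsort) (X : QTerm var varsort index bindex opsym) :
    qPerm (sw zs z1 z2) (qSwap z1 z2 zs X) = X := by
  rw [(qSwap_eq z1 z2 zs).1, (qPerm_comp _ _).1]
  have : (fun s => sw zs z1 z2 s * sw zs z1 z2 s) = fun _ => (1 : Equiv.Perm var) := by
    funext s
    unfold sw
    split_ifs <;> simp
  rw [this, qPerm_one.1]

/-! #### Inversion lemmas -/

theorem fresh_var_iff {ys xs : varsort} {y x : var} :
    QFresh (index := index) (bindex := bindex) (opsym := opsym) ys y (.qVar xs x)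
      ↔ (ys, y) ≠ (xs, x) :=
  ⟨fun h => by cases h; assumption, .qVar⟩

theorem fresh_op_iff {ys : varsort} {y : var} {d : opsym}
    {inp : index → Option (QTerm var varsort index bindex opsym)}
    {binp : bindex → Option (QAbs var varsort index bindex opsym)} :
    QFresh ys y (.qOp d inp binp) ↔ (∀ i X, inp i = some X → QFresh ys y X) ∧
      (∀ j A, binp j = some A → QFreshAbs ys y A) :=
  ⟨fun h => by cases h; exact ⟨by assumption, by assumption⟩, fun h => .qOp h.1 h.2⟩

theorem fresh_abs_iff {ys xs : varsort} {y x : var} {X : QTerm var varsort index bindex opsym} :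
    QFreshAbs ys y (.qAbs xs x X) ↔ (ys = xs ∧ y = x) ∨ QFresh ys y X := by
  constructor
  · intro h
    cases h
    · left; exact ⟨rfl, rfl⟩
    · right; assumption
  · rintro (⟨rfl, rfl⟩ | h)
    · exact .qAbs_bound
    · exact .qAbs_body h

theorem fresh_perm (p : varsort → Equiv.Perm var) (ys : varsort) (y : var) :
    (∀ X : QTerm var varsort index bindex opsym,
      QFresh ys (p ys y) (qPerm p X) ↔ QFresh ys y X) ∧
    (∀ A : QAbs var varsort index bindex opsym,
      QFreshAbs ys (p ys y) (qPermAbs p A) ↔ QFreshAbs ys y A) := by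
  apply qind
  · intro xs x
    rw [qPerm_var, fresh_var_iff, fresh_var_iff]
    simp only [ne_eq, Prod.mk.injEq, not_and]
    constructor
    · rintro h rfl rfl; exact h rfl rfl
    · rintro h rfl e; exact h rfl ((p ys).injective e)
  · intro d inp binp h1 h2
    rw [qPerm_op, fresh_op_iff, fresh_op_iff]
    constructor
    · rintro ⟨a, b⟩
      exact ⟨fun i X h => (h1 i X h).1 (a i _ (by simp [h])),
        fun i X h => (h2 i X h).1 (b i _ (by simp [h]))⟩
    · rintro ⟨a, b⟩
      constructor
      · intro i X h
        obtain ⟨X0, h0, rfl⟩ := Option.map_eq_some_iff.1 h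
        exact (h1 i X0 h0).2 (a i X0 h0)
      · intro i X h
        obtain ⟨X0, h0, rfl⟩ := Option.map_eq_some_iff.1 h
        exact (h2 i X0 h0).2 (b i X0 h0)
  · intro xs x X h
    simp only [qPermAbs, fresh_abs_iff, h]
    constructor
    · rintro (⟨rfl, e⟩ | h)
      · exact Or.inl ⟨rfl, (p ys).injective e⟩
      · exact Or.inr h
    · rintro (⟨rfl, rfl⟩ | h)
      · exact Or.inl ⟨rfl, rfl⟩
      · exact Or.inr h

theorem good_op_iff {d : opsym}
    {inp : index → Option (QTerm var varsort index bindex opsym)}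
    {binp : bindex → Option (QAbs var varsort index bindex opsym)} :
    QGood (.qOp d inp binp) ↔ (∀ i X, inp i = some X → QGood X) ∧
      (∀ j A, binp j = some A → QGoodAbs A) ∧ smallDom var inp ∧ smallDom var binp :=
  ⟨fun h => by cases h; exact ⟨by assumption, by assumption, by assumption, by assumption⟩,
    fun h => .qOp h.1 h.2.1 h.2.2.1 h.2.2.2⟩

theorem good_abs_iff {xs : varsort} {x : var} {X : QTerm var varsort index bindex opsym} :
    QGoodAbs (.qAbs xs x X) ↔ QGood X :=
  ⟨fun h => by cases h; assumption, .qAbs⟩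

theorem idom_map {α β γ : Type u} (f : β → γ) (inp : α → Option β) :
    idom (fun i => (inp i).map f) = idom inp := by
  ext i; simp [idom]

theorem good_perm (p : varsort → Equiv.Perm var) :
    (∀ X : QTerm var varsort index bindex opsym, QGood X → QGood (qPerm p X)) ∧
    (∀ A : QAbs var varsort index bindex opsym, QGoodAbs A → QGoodAbs (qPermAbs p A)) := by
  apply qind
  · intro xs x _
    exact .qVar
  · intro d inp binp h1 h2 hg
    rw [good_op_iff] at hg
    obtain ⟨a, b, c, e⟩ := hg
    rw [qPerm_op, good_op_iff]
    refine ⟨?_, ?_, ?_, ?_⟩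
    · intro i X h
      obtain ⟨X0, h0, rfl⟩ := Option.map_eq_some_iff.1 h
      exact h1 i X0 h0 (a i X0 h0)
    · intro i X h
      obtain ⟨X0, h0, rfl⟩ := Option.map_eq_some_iff.1 h
      exact h2 i X0 h0 (b i X0 h0)
    · unfold smallDom; rw [idom_map]; exact c
    · unfold smallDom; rw [idom_map]; exact e
  · intro xs x X h hg
    exact .qAbs (h (good_abs_iff.1 hg))

/-! #### Alpha-equivalence relative to a correspondence of free variables -/

/-- Updating a correspondence at a pair of bound variables. -/
def upd (R : varsort → var → var → Prop) (xs : varsort) (x x' : var) :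
    varsort → var → var → Prop :=
  fun ys a a' => (ys = xs ∧ a = x ∧ a' = x') ∨
    (R ys a a' ∧ ¬ (ys = xs ∧ a = x) ∧ ¬ (ys = xs ∧ a' = x'))

mutual
inductive AlphaE : (varsort → var → var → Prop) → QTerm var varsort index bindex opsym →
    QTerm var varsort index bindex opsym → Prop where
  | qVar : ∀ {R xs x x'}, R xs x x' → AlphaE R (.qVar xs x) (.qVar xs x')
  | qOp : ∀ {R d inp binp inp' binp'},
      (∀ i, inp i = none ↔ inp' i = none) →
      (∀ i X X', inp i = some X → inp' i = some X' → AlphaE R X X') →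
      (∀ j, binp j = none ↔ binp' j = none) →
      (∀ j A A', binp j = some A → binp' j = some A' → AlphaEAbs R A A') →
      AlphaE R (.qOp d inp binp) (.qOp d inp' binp')
inductive AlphaEAbs : (varsort → var → var → Prop) → QAbs var varsort index bindex opsym →
    QAbs var varsort index bindex opsym → Prop where
  | qAbs : ∀ {R xs x x' X X'}, AlphaE (upd R xs x x') X X' →
      AlphaEAbs R (.qAbs xs x X) (.qAbs xs x' X')
end

theorem some_of_iff {α β : Type*} {a : Option α} {b : Option β} (h : a = none ↔ b = none)
    {y : β} (hb : b = some y) : ∃ x, a = some x := by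
  cases a with
  | none => have := h.1 rfl; simp_all
  | some x => exact ⟨x, rfl⟩

theorem AlphaE_refl :
    (∀ (X : QTerm var varsort index bindex opsym) (R : varsort → var → var → Prop),
      (∀ s a, R s a a) → AlphaE R X X) ∧
    (∀ (A : QAbs var varsort index bindex opsym) (R : varsort → var → var → Prop),
      (∀ s a, R s a a) → AlphaEAbs R A A) := by
  apply qind
  · intro xs x R h
    exact .qVar (h _ _)
  · intro d inp binp h1 h2 R h
    refine .qOp (fun _ => Iff.rfl) ?_ (fun _ => Iff.rfl) ?_
    · intro i X X' e e'
      rw [e] at e'; cases e'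
      exact h1 i X e R h
    · intro i X X' e e'
      rw [e] at e'; cases e'
      exact h2 i X e R h
  · intro xs x X ih R h
    refine .qAbs (ih _ ?_)
    intro s a
    unfold upd
    by_cases hs : s = xs ∧ a = x
    · exact Or.inl ⟨hs.1, hs.2, hs.2⟩
    · exact Or.inr ⟨h _ _, hs, hs⟩

theorem AlphaE_symm :
    (∀ (X X' : QTerm var varsort index bindex opsym) (R S : varsort → var → var → Prop),
      (∀ s a b, R s a b → S s b a) → AlphaE R X X' → AlphaE S X' X) ∧
    (∀ (A A' : QAbs var varsort index bindex opsym) (R S : varsort → var → var → Prop),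
      (∀ s a b, R s a b → S s b a) → AlphaEAbs R A A' → AlphaEAbs S A' A) := by
  apply qind
  · intro xs x X' R S h hE
    cases hE with
    | qVar hr => exact .qVar (h _ _ _ hr)
  · intro d inp binp h1 h2 X' R S h hE
    cases hE with
    | qOp a b c e =>
      exact .qOp (fun i => (a i).symm) (fun i X X' u v => h1 i _ v _ R S h (b i _ _ v u))
        (fun i => (c i).symm) (fun i X X' u v => h2 i _ v _ R S h (e i _ _ v u))
  · intro xs x X ih A' R S h hE
    cases hE with
    | qAbs hb =>
      refine .qAbs (ih _ _ _ ?_ hb)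
      rintro s a b (⟨rfl, rfl, rfl⟩ | ⟨k1, k2, k3⟩)
      · exact Or.inl ⟨rfl, rfl, rfl⟩
      · exact Or.inr ⟨h _ _ _ k1, k3, k2⟩

theorem AlphaE_trans :
    (∀ (X X' X'' : QTerm var varsort index bindex opsym)
      (R S T : varsort → var → var → Prop),
      (∀ s a b c, R s a b → S s b c → T s a c) →
      AlphaE R X X' → AlphaE S X' X'' → AlphaE T X X'') ∧
    (∀ (A A' A'' : QAbs var varsort index bindex opsym)
      (R S T : varsort → var → var → Prop),
      (∀ s a b c, R s a b → S s b c → T s a c) →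
      AlphaEAbs R A A' → AlphaEAbs S A' A'' → AlphaEAbs T A A'') := by
  apply qind
  · intro xs x X' X'' R S T h hE hE'
    cases hE with
    | qVar hr =>
      cases hE' with
      | qVar hr' => exact .qVar (h _ _ _ _ hr hr')
  · intro d inp binp h1 h2 X' X'' R S T h hE hE'
    cases hE with
    | qOp a b c e =>
      cases hE' with
      | qOp a' b' c' e' =>
        refine .qOp (fun i => (a i).trans (a' i)) ?_ (fun i => (c i).trans (c' i)) ?_
        · intro i X X'' u v
          obtain ⟨X', w⟩ := some_of_iff (a' i) v
          exact h1 i X u X' X'' R S T h (b i _ _ u w) (b' i _ _ w v)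
        · intro i X X'' u v
          obtain ⟨X', w⟩ := some_of_iff (c' i) v
          exact h2 i X u X' X'' R S T h (e i _ _ u w) (e' i _ _ w v)
  · intro xs x X ih A' A'' R S T h hE hE'
    cases hE with
    | qAbs hb =>
      cases hE' with
      | qAbs hb' =>
        refine .qAbs (ih _ _ _ _ _ ?_ hb hb')
        rintro s a b c (⟨rfl, rfl, rfl⟩ | ⟨k1, k2, k3⟩) (⟨l1, l2, l3⟩ | ⟨l1, l2, l3⟩)
        · exact Or.inl ⟨rfl, rfl, l3⟩
        · exact absurd ⟨rfl, rfl⟩ l2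
        · exact absurd ⟨l1, l2⟩ k3
        · exact Or.inr ⟨h _ _ _ _ k1 l1, k2, l3⟩

/-- Monotonicity (on free variables) and equivariance at once. -/
theorem AlphaE_perm :
    (∀ (X X' : QTerm var varsort index bindex opsym) (R S : varsort → var → var → Prop)
      (p p' : varsort → Equiv.Perm var),
      (∀ s a b, ¬ QFresh s a X → ¬ QFresh s b X' → R s a b → S s (p s a) (p' s b)) →
      AlphaE R X X' → AlphaE S (qPerm p X) (qPerm p' X')) ∧
    (∀ (A A' : QAbs var varsort index bindex opsym) (R S : varsort → var → var → Prop)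
      (p p' : varsort → Equiv.Perm var),
      (∀ s a b, ¬ QFreshAbs s a A → ¬ QFreshAbs s b A' → R s a b → S s (p s a) (p' s b)) →
      AlphaEAbs R A A' → AlphaEAbs S (qPermAbs p A) (qPermAbs p' A')) := by
  apply qind
  · intro xs x X' R S p p' h hE
    cases hE with
    | qVar hr =>
      refine .qVar (h _ _ _ ?_ ?_ hr) <;> simp [fresh_var_iff]
  · intro d inp binp h1 h2 X' R S p p' h hE
    cases hE with
    | qOp a b c e =>
      rw [qPerm_op, qPerm_op]
      refine .qOp (fun i => by simp [a i]) ?_ (fun i => by simp [c i]) ?_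
      · intro i X X' u v
        obtain ⟨X0, u0, rfl⟩ := Option.map_eq_some_iff.1 u
        obtain ⟨X1, v0, rfl⟩ := Option.map_eq_some_iff.1 v
        refine h1 i X0 u0 X1 R S p p' ?_ (b i _ _ u0 v0)
        intro s a b f1 f2
        refine h s a b ?_ ?_
        · exact fun f => f1 ((fresh_op_iff.1 f).1 i _ u0)
        · exact fun f => f2 ((fresh_op_iff.1 f).1 i _ v0)
      · intro i X X' u v
        obtain ⟨X0, u0, rfl⟩ := Option.map_eq_some_iff.1 u
        obtain ⟨X1, v0, rfl⟩ := Option.map_eq_some_iff.1 v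
        refine h2 i X0 u0 X1 R S p p' ?_ (e i _ _ u0 v0)
        intro s a b f1 f2
        refine h s a b ?_ ?_
        · exact fun f => f1 ((fresh_op_iff.1 f).2 i _ u0)
        · exact fun f => f2 ((fresh_op_iff.1 f).2 i _ v0)
  · intro xs x X ih A' R S p p' h hE
    cases hE with
    | qAbs hb =>
      refine .qAbs (ih _ _ _ p p' ?_ hb)
      rintro s a b f1 f2 (⟨rfl, rfl, rfl⟩ | ⟨k1, k2, k3⟩)
      · exact Or.inl ⟨rfl, rfl, rfl⟩
      · refine Or.inr ⟨h _ _ _ ?_ ?_ k1, ?_, ?_⟩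
        · rw [fresh_abs_iff]; tauto
        · rw [fresh_abs_iff]; tauto
        · rintro ⟨rfl, e⟩; exact k2 ⟨rfl, (p s).injective e⟩
        · rintro ⟨rfl, e⟩; exact k3 ⟨rfl, (p' s).injective e⟩

theorem AlphaE_mono {X X' : QTerm var varsort index bindex opsym}
    {R S : varsort → var → var → Prop}
    (h : ∀ s a b, ¬ QFresh s a X → ¬ QFresh s b X' → R s a b → S s a b)
    (hE : AlphaE R X X') : AlphaE S X X' := by
  have := AlphaE_perm.1 X X' R S (fun _ => 1) (fun _ => 1) (by simpa using h) hE
  rwa [qPerm_one.1, qPerm_one.1] at this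

/-- The identity correspondence. -/
def idR : varsort → var → var → Prop := fun _ a b => a = b

theorem sw_apply (zs : varsort) (z1 z2 : var) (s : varsort) (a : var) :
    sw zs z1 z2 s a = if s = zs then (if a = z1 then z2 else if a = z2 then z1 else a) else a := by
  unfold sw
  split_ifs <;> simp_all [Equiv.swap_apply_def]

theorem Alpha_step {xs : varsort} {x x' y : var}
    {X X' : QTerm var varsort index bindex opsym} (hy : y ∉ ({x, x'} : Set var))
    (f : QFresh xs y X) (f' : QFresh xs y X')
    (ih : AlphaE idR (qSwap y x xs X) (qSwap y x' xs X')) :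
    AlphaEAbs idR (.qAbs xs x X) (.qAbs xs x' X') := by
  have hy1 : y ≠ x := fun e => hy (by simp [e])
  have hy2 : y ≠ x' := fun e => hy (by simp [e])
  have := AlphaE_perm.1 _ _ idR (fun s a b => idR s (sw xs y x s a) (sw xs y x' s b))
    (sw xs y x) (sw xs y x') ?_ ih
  · rw [qSwap_qSwap, qSwap_qSwap] at this
    refine .qAbs (AlphaE_mono ?_ this)
    intro s a b fa fb hab
    have ha : ¬ (s = xs ∧ a = y) := by rintro ⟨rfl, rfl⟩; exact fa f
    have hb : ¬ (s = xs ∧ b = y) := by rintro ⟨rfl, rfl⟩; exact fb f'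
    simp only [idR, sw_apply] at hab
    unfold upd idR
    grind
  · intro s a b _ _ hab
    have hab : a = b := hab
    subst hab
    simp only [idR, sw_apply]
    grind

theorem Alpha_to_AlphaE {X X' : QTerm var varsort index bindex opsym} (h : Alpha X X') :
    AlphaE idR X X' := by
  refine Alpha.rec (motive_1 := fun X X' _ => AlphaE idR X X')
    (motive_2 := fun A A' _ => AlphaEAbs idR A A') ?_ ?_ ?_ h
  · intro xs x; exact .qVar rfl
  · intro d inp binp inp' binp' a _ c _ b e
    exact .qOp a b c e
  · intro xs x x' X X' y hy f f' _ ih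
    exact Alpha_step hy f f' ih

theorem AlphaAbs_to_AlphaEAbs {A A' : QAbs var varsort index bindex opsym}
    (h : AlphaAbs A A') : AlphaEAbs idR A A' := by
  cases h with
  | qAbs hy f f' h => exact Alpha_step hy f f' (Alpha_to_AlphaE h)

theorem AlphaE_of_tmk {X X' : QTerm var varsort index bindex opsym} (h : tmk X = tmk X') :
    AlphaE idR X X' := by
  have h' := Quot.eqvGen_exact h
  induction h' with
  | rel _ _ hr => exact Alpha_to_AlphaE hr
  | refl _ => exact AlphaE_refl.1 _ _ (fun _ _ => rfl)
  | symm _ _ hh ih =>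
    exact AlphaE_symm.1 _ _ _ _ (fun _ _ _ e => Eq.symm e) (ih (Quot.eqvGen_sound hh))
  | trans _ _ _ h1 h2 ih1 ih2 =>
    exact AlphaE_trans.1 _ _ _ idR idR idR (fun _ _ _ _ e e' => Eq.trans e e')
      (ih1 (Quot.eqvGen_sound h1)) (ih2 (Quot.eqvGen_sound h2))

theorem AlphaEAbs_of_amk {A A' : QAbs var varsort index bindex opsym} (h : amk A = amk A') :
    AlphaEAbs idR A A' := by
  have h' := Quot.eqvGen_exact h
  induction h' with
  | rel _ _ hr => exact AlphaAbs_to_AlphaEAbs hr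
  | refl _ => exact AlphaE_refl.2 _ _ (fun _ _ => rfl)
  | symm _ _ hh ih =>
    exact AlphaE_symm.2 _ _ _ _ (fun _ _ _ e => Eq.symm e) (ih (Quot.eqvGen_sound hh))
  | trans _ _ _ h1 h2 ih1 ih2 =>
    exact AlphaE_trans.2 _ _ _ idR idR idR (fun _ _ _ _ e e' => Eq.trans e e')
      (ih1 (Quot.eqvGen_sound h1)) (ih2 (Quot.eqvGen_sound h2))

theorem AlphaE_good :
    (∀ (X X' : QTerm var varsort index bindex opsym) (R : varsort → var → var → Prop),
      AlphaE R X X' → QGood X → QGood X') ∧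
    (∀ (A A' : QAbs var varsort index bindex opsym) (R : varsort → var → var → Prop),
      AlphaEAbs R A A' → QGoodAbs A → QGoodAbs A') := by
  apply qind
  · intro xs x X' R hE _
    cases hE with
    | qVar hr => exact .qVar
  · intro d inp binp h1 h2 X' R hE hg
    obtain ⟨g1, g2, g3, g4⟩ := good_op_iff.1 hg
    cases hE with
    | @qOp _ _ _ _ inp' binp' a b c e =>
      refine .qOp ?_ ?_ ?_ ?_
      · intro i X' v
        obtain ⟨X, u⟩ := some_of_iff (a i) v
        exact h1 i X u X' R (b i _ _ u v) (g1 i X u)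
      · intro i X' v
        obtain ⟨X, u⟩ := some_of_iff (c i) v
        exact h2 i X u X' R (e i _ _ u v) (g2 i X u)
      · have : idom inp' = idom inp := by ext i; simp [idom, a i]
        unfold smallDom; rw [this]; exact g3
      · have : idom binp' = idom binp := by ext i; simp [idom, c i]
        unfold smallDom; rw [this]; exact g4
  · intro xs x X ih A' R hE hg
    cases hE with
    | qAbs hb => exact .qAbs (ih _ _ hb (good_abs_iff.1 hg))

theorem small_nonfresh (hreg : (Cardinal.mk var).IsRegular) (s : varsort) :
    (∀ X : QTerm var varsort index bindex opsym, QGood X →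
      Cardinal.mk {y | ¬ QFresh s y X} < Cardinal.mk var) ∧
    (∀ A : QAbs var varsort index bindex opsym, QGoodAbs A →
      Cardinal.mk {y | ¬ QFreshAbs s y A} < Cardinal.mk var) := by
  apply qind
  · intro xs x _
    have hsub : {y | ¬ QFresh (index := index) (bindex := bindex) (opsym := opsym) s y
        (.qVar xs x)} ⊆ {x} := by
      intro y hy
      simp only [Set.mem_ofPred_eq, fresh_var_iff, ne_eq, not_not, Prod.mk.injEq] at hy
      exact hy.2
    refine (Cardinal.mk_le_mk_of_subset hsub).trans_lt ?_
    refine lt_of_lt_of_le ?_ hreg.aleph0_le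
    rw [Cardinal.mk_singleton]
    exact Cardinal.one_lt_aleph0
  · intro d inp binp h1 h2 hg
    obtain ⟨g1, g2, g3, g4⟩ := good_op_iff.1 hg
    have hsub : {y | ¬ QFresh s y (.qOp d inp binp)} ⊆
        (⋃ i : idom inp, {y | ∃ X, inp i = some X ∧ ¬ QFresh s y X}) ∪
        (⋃ j : idom binp, {y | ∃ A, binp j = some A ∧ ¬ QFreshAbs s y A}) := by
      intro y hy
      rw [Set.mem_ofPred_eq, fresh_op_iff, not_and_or] at hy
      rcases hy with hy | hy
      · push Not at hy
        obtain ⟨i, X, e, f⟩ := hy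
        exact Or.inl (Set.mem_iUnion.2 ⟨⟨i, by simp [idom, e]⟩, X, e, f⟩)
      · push Not at hy
        obtain ⟨i, X, e, f⟩ := hy
        exact Or.inr (Set.mem_iUnion.2 ⟨⟨i, by simp [idom, e]⟩, X, e, f⟩)
    refine (Cardinal.mk_le_mk_of_subset hsub).trans_lt ?_
    refine (Cardinal.mk_union_le _ _).trans_lt (Cardinal.add_lt_of_lt hreg.aleph0_le ?_ ?_)
    · rw [Cardinal.card_iUnion_lt_iff_forall_of_isRegular hreg g3]
      rintro ⟨i, hi⟩
      obtain ⟨X, e⟩ := Option.ne_none_iff_exists'.1 hi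
      simpa [e] using h1 i X e (g1 i X e)
    · rw [Cardinal.card_iUnion_lt_iff_forall_of_isRegular hreg g4]
      rintro ⟨i, hi⟩
      obtain ⟨X, e⟩ := Option.ne_none_iff_exists'.1 hi
      simpa [e] using h2 i X e (g2 i X e)
  · intro xs x X ih hg
    refine (Cardinal.mk_le_mk_of_subset ?_).trans_lt (ih (good_abs_iff.1 hg))
    intro y hy f
    exact hy (.qAbs_body f)

theorem exists_fresh (hreg : (Cardinal.mk var).IsRegular) (s : varsort) (b b' : var)
    {X X' : QTerm var varsort index bindex opsym} (hX : QGood X) (hX' : QGood X') :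
    ∃ y, y ∉ ({b, b'} : Set var) ∧ QFresh s y X ∧ QFresh s y X' := by
  by_contra hc
  push Not at hc
  have hsub : (Set.univ : Set var) ⊆
      ({b, b'} : Set var) ∪ ({y | ¬ QFresh s y X} ∪ {y | ¬ QFresh s y X'}) := by
    intro y _
    by_cases h1 : y ∈ ({b, b'} : Set var)
    · exact Or.inl h1
    · by_cases h2 : QFresh s y X
      · exact Or.inr (Or.inr (hc y h1 h2))
      · exact Or.inr (Or.inl h2)
  have h := Cardinal.mk_le_mk_of_subset hsub
  rw [Cardinal.mk_univ] at h
  refine absurd h (not_le.2 ?_)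
  refine (Cardinal.mk_union_le _ _).trans_lt (Cardinal.add_lt_of_lt hreg.aleph0_le ?_ ?_)
  · exact lt_of_lt_of_le (Cardinal.lt_aleph0_iff_set_finite.2 (Set.toFinite _)) hreg.aleph0_le
  · exact (Cardinal.mk_union_le _ _).trans_lt (Cardinal.add_lt_of_lt hreg.aleph0_le
      ((small_nonfresh hreg s).1 X hX) ((small_nonfresh hreg s).1 X' hX'))

theorem AlphaE_to_Alpha_aux (hreg : (Cardinal.mk var).IsRegular) :
    (∀ (X X' : QTerm var varsort index bindex opsym) (R : varsort → var → var → Prop)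
      (p p' : varsort → Equiv.Perm var), QGood X →
      (∀ s a b, ¬ QFresh s a X → ¬ QFresh s b X' → R s a b → p s a = p' s b) →
      AlphaE R X X' → Alpha (qPerm p X) (qPerm p' X')) ∧
    (∀ (A A' : QAbs var varsort index bindex opsym) (R : varsort → var → var → Prop)
      (p p' : varsort → Equiv.Perm var), QGoodAbs A →
      (∀ s a b, ¬ QFreshAbs s a A → ¬ QFreshAbs s b A' → R s a b → p s a = p' s b) →
      AlphaEAbs R A A' → AlphaAbs (qPermAbs p A) (qPermAbs p' A')) := by
  apply qind
  · intro xs x X' R p p' _ h hE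
    cases hE with
    | @qVar _ _ _ x' hr =>
      rw [qPerm_var, qPerm_var]
      have : p xs x = p' xs x' := by
        refine h _ _ _ ?_ ?_ hr <;> simp [fresh_var_iff]
      rw [this]
      exact .qVar
  · intro d inp binp h1 h2 X' R p p' hg h hE
    obtain ⟨g1, g2, g3, g4⟩ := good_op_iff.1 hg
    cases hE with
    | qOp a b c e =>
      rw [qPerm_op, qPerm_op]
      refine .qOp (fun i => by simp [a i]) ?_ (fun i => by simp [c i]) ?_
      · intro i X X' u v
        obtain ⟨X0, u0, rfl⟩ := Option.map_eq_some_iff.1 u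
        obtain ⟨X1, v0, rfl⟩ := Option.map_eq_some_iff.1 v
        refine h1 i X0 u0 X1 R p p' (g1 i X0 u0) ?_ (b i _ _ u0 v0)
        intro s a b f1 f2
        refine h s a b ?_ ?_
        · exact fun f => f1 ((fresh_op_iff.1 f).1 i _ u0)
        · exact fun f => f2 ((fresh_op_iff.1 f).1 i _ v0)
      · intro i X X' u v
        obtain ⟨X0, u0, rfl⟩ := Option.map_eq_some_iff.1 u
        obtain ⟨X1, v0, rfl⟩ := Option.map_eq_some_iff.1 v
        refine h2 i X0 u0 X1 R p p' (g2 i X0 u0) ?_ (e i _ _ u0 v0)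
        intro s a b f1 f2
        refine h s a b ?_ ?_
        · exact fun f => f1 ((fresh_op_iff.1 f).2 i _ u0)
        · exact fun f => f2 ((fresh_op_iff.1 f).2 i _ v0)
  · intro xs x X ih A' R p p' hg h hE
    have hg := good_abs_iff.1 hg
    cases hE with
    | @qAbs _ _ _ x' _ X' hb =>
      have hg' := AlphaE_good.1 _ _ _ hb hg
      obtain ⟨y, hy, f, f'⟩ := exists_fresh hreg xs (p xs x) (p' xs x')
        ((good_perm p).1 X hg) ((good_perm p').1 X' hg')
      refine .qAbs hy f f' ?_
      rw [(qSwap_eq _ _ _).1, (qSwap_eq _ _ _).1, (qPerm_comp _ _).1, (qPerm_comp _ _).1]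
      refine ih _ _ _ _ hg ?_ hb
      rintro s a b f1 f2 (⟨rfl, rfl, rfl⟩ | ⟨k1, k2, k3⟩)
      · simp [sw]
      · have e : p s a = p' s b := by
          refine h _ _ _ ?_ ?_ k1
          · rw [fresh_abs_iff]; tauto
          · rw [fresh_abs_iff]; tauto
        simp only [Equiv.Perm.mul_apply, sw_apply]
        by_cases hs : s = xs
        · subst hs
          have n1 : p s a ≠ y := by
            rintro rfl; exact f1 (((fresh_perm p s a).1 X).1 f)
          have n2 : p' s b ≠ y := by
            rintro rfl; exact f2 (((fresh_perm p' s b).1 X').1 f')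
          have n3 : p s a ≠ p s x := fun e => k2 ⟨rfl, (p s).injective e⟩
          have n4 : p' s b ≠ p' s x' := fun e => k3 ⟨rfl, (p' s).injective e⟩
          rw [if_pos rfl, if_pos rfl, if_neg n1, if_neg n2, if_neg n3, if_neg n4, e]
        · simp [hs, e]

theorem tmk_of_AlphaE (hreg : (Cardinal.mk var).IsRegular)
    {X X' : QTerm var varsort index bindex opsym} (hX : QGood X) (h : AlphaE idR X X') :
    tmk X = tmk X' := by
  have := (AlphaE_to_Alpha_aux hreg).1 X X' idR (fun _ => 1) (fun _ => 1) hX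
    (fun s a b _ _ e => e) h
  rw [qPerm_one.1, qPerm_one.1] at this
  exact Quot.sound this

theorem amk_of_AlphaEAbs (hreg : (Cardinal.mk var).IsRegular)
    {A A' : QAbs var varsort index bindex opsym} (hA : QGoodAbs A) (h : AlphaEAbs idR A A') :
    amk A = amk A' := by
  have := (AlphaE_to_Alpha_aux hreg).2 A A' idR (fun _ => 1) (fun _ => 1) hA
    (fun s a b _ _ e => e) h
  rw [qPerm_one.2, qPerm_one.2] at this
  exact Quot.sound this

theorem upd_id (xs : varsort) (x : var) : upd idR xs x x = idR := by
  funext s a b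
  unfold upd idR
  apply propext
  grind

/-! #### Parallel substitution on quasiterms -/

theorem QPSubst_good (ρ : varsort → var → Option (QTerm var varsort index bindex opsym))
    (hρ : ∀ s y Y, ρ s y = some Y → QGood Y) :
    (∀ X Z, QPSubst X ρ Z → QGood X → QGood Z) ∧
    (∀ A B, QPSubstAbs A ρ B → QGoodAbs A → QGoodAbs B) := by
  apply qind
  · intro xs x Z hE _
    cases hE with
    | var_some h => exact hρ _ _ _ h
    | var_none h => exact .qVar
  · intro d inp binp h1 h2 Z hE hg
    obtain ⟨g1, g2, g3, g4⟩ := good_op_iff.1 hg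
    cases hE with
    | @op _ _ _ _ inp' binp' a b c e =>
      refine .qOp ?_ ?_ ?_ ?_
      · intro i X' v
        obtain ⟨X, u⟩ := some_of_iff (a i) v
        exact h1 i X u X' (b i _ _ u v) (g1 i X u)
      · intro i X' v
        obtain ⟨X, u⟩ := some_of_iff (c i) v
        exact h2 i X u X' (e i _ _ u v) (g2 i X u)
      · have : idom inp' = idom inp := by ext i; simp [idom, a i]
        unfold smallDom; rw [this]; exact g3
      · have : idom binp' = idom binp := by ext i; simp [idom, c i]
        unfold smallDom; rw [this]; exact g4
  · intro xs x X ih B hE hg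
    cases hE with
    | abs _ _ hb => exact .qAbs (ih _ hb (good_abs_iff.1 hg))

/-- Parallel substitution respects (relative) alpha-equivalence. -/
theorem QPSubst_AlphaE (ρ : varsort → var → Option (QTerm var varsort index bindex opsym)) :
    (∀ X X' Z Z' (R : varsort → var → var → Prop),
      (∀ s a b, R s a b → (ρ s a = none ↔ ρ s b = none)) →
      (∀ s a b Y Y', R s a b → ρ s a = some Y → ρ s b = some Y' → AlphaE R Y Y') →
      AlphaE R X X' → QPSubst X ρ Z → QPSubst X' ρ Z' → AlphaE R Z Z') ∧
    (∀ A A' B B' (R : varsort → var → var → Prop),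
      (∀ s a b, R s a b → (ρ s a = none ↔ ρ s b = none)) →
      (∀ s a b Y Y', R s a b → ρ s a = some Y → ρ s b = some Y' → AlphaE R Y Y') →
      AlphaEAbs R A A' → QPSubstAbs A ρ B → QPSubstAbs A' ρ B' → AlphaEAbs R B B') := by
  apply qind
  · intro xs x X' Z Z' R hn hs hE h h'
    cases hE with
    | qVar hr =>
      cases h with
      | var_some e =>
        cases h' with
        | var_some e' => exact hs _ _ _ _ _ hr e e'
        | var_none e' => have := (hn _ _ _ hr).2 e'; simp_all
      | var_none e =>
        cases h' with
        | var_some e' => have := (hn _ _ _ hr).1 e; simp_all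
        | var_none e' => exact .qVar hr
  · intro d inp binp h1 h2 X' Z Z' R hn hs hE h h'
    cases hE with
    | qOp a b c e =>
      cases h with
      | op a1 b1 c1 e1 =>
        cases h' with
        | op a2 b2 c2 e2 =>
          refine .qOp (fun i => (a1 i).symm.trans ((a i).trans (a2 i))) ?_
            (fun i => (c1 i).symm.trans ((c i).trans (c2 i))) ?_
          · intro i W W' u v
            obtain ⟨X, u0⟩ := some_of_iff (a1 i) u
            obtain ⟨X', v0⟩ := some_of_iff (a2 i) v
            exact h1 i X u0 X' W W' R hn hs (b i _ _ u0 v0) (b1 i _ _ u0 u) (b2 i _ _ v0 v)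
          · intro i W W' u v
            obtain ⟨X, u0⟩ := some_of_iff (c1 i) u
            obtain ⟨X', v0⟩ := some_of_iff (c2 i) v
            exact h2 i X u0 X' W W' R hn hs (e i _ _ u0 v0) (e1 i _ _ u0 u) (e2 i _ _ v0 v)
  · intro xs x X ih A' B B' R hn hs hE h h'
    cases hE with
    | qAbs hb =>
      cases h with
      | abs n1 f1 s1 =>
        cases h' with
        | abs n2 f2 s2 =>
          refine .qAbs (ih _ _ _ _ ?_ ?_ hb s1 s2)
          · rintro s a b (⟨rfl, rfl, rfl⟩ | ⟨k1, k2, k3⟩)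
            · simp [n1, n2]
            · exact hn _ _ _ k1
          · rintro s a b Y Y' (⟨rfl, rfl, rfl⟩ | ⟨k1, k2, k3⟩) e e'
            · simp_all
            · refine AlphaE_mono ?_ (hs _ _ _ _ _ k1 e e')
              intro t c d fc fd hcd
              refine Or.inr ⟨hcd, ?_, ?_⟩
              · rintro ⟨rfl, rfl⟩; exact fc (f1 _ _ _ e)
              · rintro ⟨rfl, rfl⟩; exact fd (f2 _ _ _ e')

theorem QPSubst_perm (ρ : varsort → var → Option (QTerm var varsort index bindex opsym))
    (p : varsort → Equiv.Perm var)
    (hp : ∀ s z, ρ s z = none → (∀ t y Y, ρ t y = some Y → QFresh s z Y) →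
      ρ s (p s z) = none ∧ (∀ t y Y, ρ t y = some Y → QFresh s (p s z) Y)) :
    (∀ X, (∃ Z, QPSubst X ρ Z) → ∃ Z, QPSubst (qPerm p X) ρ Z) ∧
    (∀ A, (∃ B, QPSubstAbs A ρ B) → ∃ B, QPSubstAbs (qPermAbs p A) ρ B) := by
  apply qind
  · intro xs x _
    rw [qPerm_var]
    cases h : ρ xs (p xs x) with
    | none => exact ⟨_, .var_none h⟩
    | some Y => exact ⟨_, .var_some h⟩
  · rintro d inp binp h1 h2 ⟨Z, hE⟩
    cases hE with
    | @op _ _ _ _ inp' binp' a b c e =>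
      have k1 : ∀ i, ∃ o, (((inp i).map (qPerm p) = none ↔ o = none) ∧
          ∀ X X', (inp i).map (qPerm p) = some X → o = some X' → QPSubst X ρ X') := by
        intro i
        cases u : inp i with
        | none => exact ⟨none, by simp⟩
        | some X =>
          obtain ⟨X', v⟩ := some_of_iff (a i).symm u
          obtain ⟨W, hW⟩ := h1 i X u ⟨X', b i _ _ u v⟩
          refine ⟨some W, by simp, ?_⟩
          rintro _ _ ⟨⟩ ⟨⟩
          exact hW
      have k2 : ∀ i, ∃ o, (((binp i).map (qPermAbs p) = none ↔ o = none) ∧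
          ∀ X X', (binp i).map (qPermAbs p) = some X → o = some X' → QPSubstAbs X ρ X') := by
        intro i
        cases u : binp i with
        | none => exact ⟨none, by simp⟩
        | some X =>
          obtain ⟨X', v⟩ := some_of_iff (c i).symm u
          obtain ⟨W, hW⟩ := h2 i X u ⟨X', e i _ _ u v⟩
          refine ⟨some W, by simp, ?_⟩
          rintro _ _ ⟨⟩ ⟨⟩
          exact hW
      choose o1 ho1 using k1
      choose o2 ho2 using k2
      rw [qPerm_op]
      exact ⟨.qOp d o1 o2, .op (fun i => (ho1 i).1) (fun i => (ho1 i).2)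
        (fun i => (ho2 i).1) (fun i => (ho2 i).2)⟩
  · rintro xs x X ih ⟨B, hE⟩
    cases hE with
    | abs n f hb =>
      obtain ⟨Z, hZ⟩ := ih ⟨_, hb⟩
      exact ⟨_, .abs (hp _ _ n f).1 (hp _ _ n f).2 hZ⟩

theorem tmk_trep (X : Term var varsort index bindex opsym) : tmk (trep X) = X :=
  Quot.out_eq X

/-- parallel substitution commutes with abstraction when the bound
variable is fresh for the assignment. -/
theorem psubst_abs (hinf : Cardinal.aleph0 ≤ Cardinal.mk var)
    (hreg : (Cardinal.mk var).IsRegular)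
    (X : Term var varsort index bindex opsym) (hX : good X)
    (ρ : varsort → var → Option (Term var varsort index bindex opsym))
    (hρ : ∀ ys y Y, ρ ys y = some Y → good Y)
    (xs : varsort) (x : var)
    (hnone : ρ xs x = none)
    (hfresh : ∀ ys y Y, ρ ys y = some Y → fresh xs x Y) :
    psubstAbs (Abs xs x X) ρ = Abs xs x (psubst X ρ) := by
  have hq : ∀ ys y Y, qassign ρ ys y = some Y → QGood Y := by
    intro ys y Y h
    obtain ⟨Y0, h0, rfl⟩ := Option.map_eq_some_iff.1 h
    exact hρ ys y Y0 h0
  have hn : qassign ρ xs x = none := by simp [qassign, hnone]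
  have hf : ∀ ys y Y, qassign ρ ys y = some Y → QFresh xs x Y := by
    intro ys y Y h
    obtain ⟨Y0, h0, rfl⟩ := Option.map_eq_some_iff.1 h
    exact hfresh ys y Y0 h0
  have hX : QGood (trep X) := hX
  have cong : ∀ {Y Y' : QTerm var varsort index bindex opsym}, AlphaE idR Y Y' →
      AlphaEAbs idR (.qAbs xs x Y) (.qAbs xs x Y') := by
    intro Y Y' h
    exact .qAbs (by rw [upd_id]; exact h)
  by_cases hex : ∃ Z, PSubstRel X ρ Z
  · have hps : psubst X ρ = hex.choose := dif_pos hex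
    obtain ⟨qX, qZ, e1, e2, hsub⟩ := hex.choose_spec
    rw [← hps] at e2
    have a1 : AlphaE idR (trep X) qX := AlphaE_of_tmk (by rw [tmk_trep, e1])
    have gX : QGood qX := AlphaE_good.1 _ _ _ a1 hX
    have gZ : QGood qZ := (QPSubst_good _ hq).1 _ _ hsub gX
    have a2 : AlphaE idR qZ (trep (psubst X ρ)) := AlphaE_of_tmk (by rw [tmk_trep, e2])
    have habs : QPSubstAbs (.qAbs xs x qX) (qassign ρ) (.qAbs xs x qZ) := .abs hn hf hsub
    have a3 : amk (.qAbs xs x (trep X)) = amk (.qAbs xs x qX) :=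
      amk_of_AlphaEAbs hreg (.qAbs hX) (cong a1)
    have hexA : ∃ B, PSubstAbsRel (Abs xs x X) ρ B :=
      ⟨_, _, _, a3.symm, rfl, habs⟩
    have hpsA : psubstAbs (Abs xs x X) ρ = hexA.choose := dif_pos hexA
    obtain ⟨qA, qB, e3, e4, hsubA⟩ := hexA.choose_spec
    rw [← hpsA] at e4
    have a4 : AlphaEAbs idR (.qAbs xs x qX) qA := by
      apply AlphaEAbs_of_amk
      rw [e3, ← a3]; rfl
    have a5 : AlphaEAbs idR (.qAbs xs x qZ) qB := by
      refine (QPSubst_AlphaE (qassign ρ)).2 _ _ _ _ _ ?_ ?_ a4 habs hsubA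
      · intro s a b e
        have e : a = b := e
        rw [e]
      · intro s a b Y Y' e u v
        have e : a = b := e
        subst e
        rw [u] at v
        cases v
        exact AlphaE_refl.1 _ _ (fun _ _ => rfl)
    rw [← e4, ← amk_of_AlphaEAbs hreg (.qAbs gZ) a5]
    exact amk_of_AlphaEAbs hreg (.qAbs gZ) (cong a2)
  · have hps : psubst X ρ = X := dif_neg hex
    rw [hps]
    refine dif_neg ?_
    rintro ⟨B, qA, qB, e1, e2, hsub⟩
    apply hex
    have a1 : AlphaEAbs idR (.qAbs xs x (trep X)) qA := AlphaEAbs_of_amk e1.symm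
    cases a1 with
    | @qAbs _ _ _ x' _ X' hb =>
      cases hsub with
      | @abs _ _ _ _ Z' n f hs =>
        obtain ⟨Z, hZ⟩ := (QPSubst_perm (qassign ρ) (sw xs x x') (by
          intro s z k1 k2
          rw [sw_apply]
          split_ifs with h1 h2 h3
          · subst h1; exact ⟨n, f⟩
          · subst h1; exact ⟨hn, hf⟩
          · exact ⟨k1, k2⟩
          · exact ⟨k1, k2⟩)).1 X' ⟨_, hs⟩
        refine ⟨tmk Z, _, _, ?_, rfl, hZ⟩
        have a2 := AlphaE_perm.1 (trep X) X' _ idR (fun _ => 1) (sw xs x x') (by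
          rintro s a b _ _ (⟨rfl, rfl, rfl⟩ | ⟨k1, k2, k3⟩)
          · simp [idR, sw]
          · have k1 : a = b := k1
            subst k1
            simp only [idR, sw_apply, Equiv.Perm.one_apply]
            grind) hb
        rw [qPerm_one.1] at a2
        rw [← tmk_of_AlphaE hreg hX a2, tmk_trep]

end Binding
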